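/- arXiv:2012.05485 — 2 statements merged into one kernel-verified Lean document; each statement's English description precedes it below -/
import Mathlib

section
/- Let ABC be a triangle with incenter I and circumcenter O, and let Be be the Bevan point of ABC, i.e., the point reflection of I across O. Let A₀, B₀, C₀ be the pedals of Be on lines BC, CA, AB, and assume A₀, B₀, C₀ are affinely independent with circumcenter O₀. Let A', B', C' be the pedals of Be on lines AI, BI, CI, and assume A', B', C' are affinely independent with orthocenter H'. Then Be, H' and O₀ are collinear. -/
open EuclideanGeometry

noncomputable section

/-- The Euclidean plane. -/
abbrev Pt := EuclideanSpace ℝ (Fin 2)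

/-- The pedal (orthogonal projection) of `P` on the line `XY` (the affine span of `{X, Y}`). -/
def pedal (P X Y : Pt) : Pt :=
  EuclideanGeometry.orthogonalProjection (affineSpan ℝ {X, Y}) P

/-- The reflection of `P` in the line `XY` (the affine span of `{X, Y}`). -/
def lineReflect (X Y P : Pt) : Pt :=
  EuclideanGeometry.reflection (affineSpan ℝ {X, Y}) P

/-- The circumcenter of the triangle `ABC`. -/
def circumcenter3 (A B C : Pt) (h : AffineIndependent ℝ ![A, B, C]) : Pt :=
  (⟨![A, B, C], h⟩ : Affine.Triangle ℝ Pt).circumcenter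

/-- The circumradius of the triangle `ABC`. -/
def circumradius3 (A B C : Pt) (h : AffineIndependent ℝ ![A, B, C]) : ℝ :=
  (⟨![A, B, C], h⟩ : Affine.Triangle ℝ Pt).circumradius

/-- The orthocenter of the triangle `ABC`. -/
def orthocenter3 (A B C : Pt) (h : AffineIndependent ℝ ![A, B, C]) : Pt :=
  Affine.Triangle.orthocenter (⟨![A, B, C], h⟩ : Affine.Triangle ℝ Pt)

/-- The incenter of the triangle `ABC`: `(a•A + b•B + c•C)/(a+b+c)` with
`a = dist B C`, `b = dist C A`, `c = dist A B`. -/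
def incenter3 (A B C : Pt) : Pt :=
  (dist B C + dist C A + dist A B)⁻¹ •
    (dist B C • A + dist C A • B + dist A B • C)

/-- The centroid of the triangle `ABC`. -/
def centroid3 (A B C : Pt) : Pt := (3 : ℝ)⁻¹ • (A + B + C)

/-- The Nagel point of the triangle `ABC`:
`((s−a)/s)•A + ((s−b)/s)•B + ((s−c)/s)•C` with `s` the semiperimeter. -/
def nagelPoint (A B C : Pt) : Pt :=
  (((dist B C + dist C A + dist A B) / 2 - dist B C) /
      ((dist B C + dist C A + dist A B) / 2)) • A +
    (((dist B C + dist C A + dist A B) / 2 - dist C A) /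
      ((dist B C + dist C A + dist A B) / 2)) • B +
    (((dist B C + dist C A + dist A B) / 2 - dist A B) /
      ((dist B C + dist C A + dist A B) / 2)) • C

/-!
Let `x, y, z` be the tangent lengths from `A, B, C` to the incircle, of radius `r`. Relative to the
incenter, the vertices have inner products `⟪A - I, A - I⟫ = x² + r²` and
`⟪A - I, B - I⟫ = r² - xy`, so every metric claim about the triangle becomes an identity in
`x, y, z`. The pedals of the Bevan point on the angle bisectors see the segment from `I` to `Be`
at right angles, so their circumcenter is the midpoint `O` of that segment; they add up to
`A + B + C + Be - I`, whence `H' = A + B + C - 2I` by Sylvester's theorem. The pedals on the sides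
are the extouch points, and these are equidistant from `Be + (R / r) • (H' - Be)`, where `R` is the
circumradius of `ABC`.
-/

open AffineMap
open scoped RealInnerProductSpace

section InnerProductSpace

variable {V : Type*} [NormedAddCommGroup V] [InnerProductSpace ℝ V]

theorem inner_sub_sub_eq_dist_midpoint_sq_sub (P Q A : V) :
    ⟪P - A, Q - A⟫ = dist A (midpoint ℝ P Q) ^ 2 - (dist P Q / 2) ^ 2 := by
  have hM : A - midpoint ℝ P Q = -(2⁻¹ : ℝ) • ((P - A) + (Q - A)) := by
    rw [midpoint_eq_smul_add, invOf_eq_inv]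
    module
  have hPQ : P - Q = (P - A) - (Q - A) := (sub_sub_sub_cancel_right P Q A).symm
  rw [div_pow, dist_eq_norm, dist_eq_norm, hM, hPQ, norm_smul, mul_pow,
    norm_add_sq_real (P - A), norm_sub_sq_real (P - A), norm_neg, norm_inv, Real.norm_two]
  ring

theorem dist_midpoint_eq_of_inner_eq {P Q A B : V} (h : ⟪P - A, Q - A⟫ = ⟪P - B, Q - B⟫) :
    dist A (midpoint ℝ P Q) = dist B (midpoint ℝ P Q) := by
  rw [inner_sub_sub_eq_dist_midpoint_sq_sub, inner_sub_sub_eq_dist_midpoint_sq_sub,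
    sub_left_inj] at h
  exact (sq_eq_sq₀ dist_nonneg dist_nonneg).mp h

/-- `IncenterFrame A B C I x y z` says that `x, y, z` are the lengths of the tangents from the
vertices of the triangle `ABC` to its incircle and that `I` is its incenter, encoded by its
barycentric coordinates (the side lengths). -/
structure IncenterFrame (A B C I : V) (x y z : ℝ) : Prop where
  x_pos : 0 < x
  y_pos : 0 < y
  z_pos : 0 < z
  dist_BC : dist B C = y + z
  dist_CA : dist C A = z + x
  dist_AB : dist A B = x + y
  incenter : (y + z) • (A - I) + (z + x) • (B - I) + (x + y) • (C - I) = 0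

/-- The square of the inradius of a triangle with tangent lengths `x, y, z`, by Heron's formula. -/
def inradiusSq (x y z : ℝ) : ℝ := x * y * z / (x + y + z)

/-- The ratio of the circumradius to the inradius of a triangle with tangent lengths `x, y, z`. -/
def radiusRatio (x y z : ℝ) : ℝ := (x + y) * (y + z) * (z + x) / (4 * x * y * z)

/-- The Bevan point of a triangle with incenter `I` and tangent lengths `x, y, z`. The formula
exhibits its offset from `I` as the sum of the vectors from the vertices to its pedals on the
bisectors; `IncenterFrame.bevanPoint_eq` identifies it as the reflection of `I` in the
circumcenter. -/
def bevanPoint (A B C I : V) (x y z : ℝ) : V :=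
  I + ((y + z) / (2 * x)) • (I - A) + ((z + x) / (2 * y)) • (I - B) +
    ((x + y) / (2 * z)) • (I - C)

/-- The point at which an excircle touches the side `AB`, for the tangent lengths `x, y` from `A, B`
to the incircle; its distance from `A` is `y`. -/
def extouchPoint (A B : V) (x y : ℝ) : V := lineMap A B (y / (x + y))

/-- The circumcenter of the extouch triangle, located on the line through the Bevan point and
`A + B + C - 2I`. -/
def extouchCenter (A B C I : V) (x y z : ℝ) : V :=
  lineMap (bevanPoint A B C I x y z) (A + B + C - (2 : ℝ) • I) (radiusRatio x y z)

theorem inradiusSq_rotate (x y z : ℝ) : inradiusSq y z x = inradiusSq x y z := by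
  unfold inradiusSq
  ring_nf

theorem radiusRatio_rotate (x y z : ℝ) : radiusRatio y z x = radiusRatio x y z := by
  unfold radiusRatio
  ring_nf

theorem bevanPoint_rotate (A B C I : V) (x y z : ℝ) :
    bevanPoint B C A I y z x = bevanPoint A B C I x y z := by
  unfold bevanPoint
  abel

theorem extouchCenter_rotate (A B C I : V) (x y z : ℝ) :
    extouchCenter B C A I y z x = extouchCenter A B C I x y z := by
  rw [extouchCenter, extouchCenter, bevanPoint_rotate, radiusRatio_rotate, add_rotate B C A,
    add_rotate C A B]

theorem extouchPoint_sub {x y : ℝ} (hxy : x + y ≠ 0) (A B I : V) :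
    extouchPoint A B x y - I = (x + y)⁻¹ • (x • (A - I) + y • (B - I)) := by
  rw [eq_inv_smul_iff₀ hxy, extouchPoint, lineMap_apply_module', ← add_sub, smul_add, smul_smul,
    mul_div_cancel₀ _ hxy]
  module

namespace IncenterFrame

variable {A B C I : V} {x y z : ℝ}

theorem rotate (h : IncenterFrame A B C I x y z) : IncenterFrame B C A I y z x where
  x_pos := h.y_pos
  y_pos := h.z_pos
  z_pos := h.x_pos
  dist_BC := h.dist_CA
  dist_CA := h.dist_AB
  dist_AB := h.dist_BC
  incenter := by rw [← h.incenter]; abel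

theorem inner_sub_sub (h : IncenterFrame A B C I x y z) :
    ⟪A - B, A - C⟫ = x * (x + y + z) - y * z := by
  have hBC : ‖(A - B) - (A - C)‖ = y + z := by
    rw [sub_sub_sub_cancel_left, ← dist_eq_norm, dist_comm, h.dist_BC]
  have hsq := norm_sub_sq_real (A - B) (A - C)
  rw [hBC, ← dist_eq_norm, ← dist_eq_norm, h.dist_AB, dist_comm A C, h.dist_CA] at hsq
  linarith

theorem inner_self (h : IncenterFrame A B C I x y z) :
    ⟪A - I, A - I⟫ = x ^ 2 + inradiusSq x y z := by
  have hs : x + y + z ≠ 0 := (add_pos (add_pos h.x_pos h.y_pos) h.z_pos).ne'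
  have hA : A - I = (2 * (x + y + z))⁻¹ • ((z + x) • (A - B) + (x + y) • (A - C)) := by
    rw [eq_inv_smul_iff₀ (mul_ne_zero two_ne_zero hs), ← sub_eq_zero, ← h.incenter]
    module
  have hAB : ‖A - B‖ = x + y := by rw [← dist_eq_norm, h.dist_AB]
  have hAC : ‖A - C‖ = z + x := by rw [← dist_eq_norm, dist_comm, h.dist_CA]
  rw [hA, real_inner_self_eq_norm_sq, norm_smul, mul_pow, norm_add_sq_real, norm_smul, norm_smul,
    real_inner_smul_left, real_inner_smul_right, h.inner_sub_sub, hAB, hAC, inradiusSq]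
  simp only [Real.norm_eq_abs, mul_pow, sq_abs]
  field_simp
  ring

theorem inner_AB (h : IncenterFrame A B C I x y z) :
    ⟪A - I, B - I⟫ = inradiusSq x y z - x * y := by
  have hAB : ‖(A - I) - (B - I)‖ = x + y := by
    rw [sub_sub_sub_cancel_right, ← dist_eq_norm, h.dist_AB]
  have hsq := norm_sub_sq_real (A - I) (B - I)
  rw [hAB, ← real_inner_self_eq_norm_sq, ← real_inner_self_eq_norm_sq, h.inner_self,
    h.rotate.inner_self, inradiusSq_rotate x y z] at hsq
  linarith

theorem inner_AC (h : IncenterFrame A B C I x y z) :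
    ⟪A - I, C - I⟫ = inradiusSq x y z - x * z := by
  rw [real_inner_comm, h.rotate.rotate.inner_AB, inradiusSq_rotate, inradiusSq_rotate, mul_comm]

theorem inner_bevanPoint_sub_incenter (h : IncenterFrame A B C I x y z) :
    ⟪bevanPoint A B C I x y z - I, A - I⟫ =
      x ^ 2 + inradiusSq x y z - 2 * radiusRatio x y z * inradiusSq x y z := by
  have hx := h.x_pos
  have hy := h.y_pos
  have hz := h.z_pos
  have hBe : bevanPoint A B C I x y z - I = -(((y + z) / (2 * x)) • (A - I) +
      ((z + x) / (2 * y)) • (B - I) + ((x + y) / (2 * z)) • (C - I)) := by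
    unfold bevanPoint
    module
  rw [hBe, inner_neg_left, inner_add_left, inner_add_left, real_inner_smul_left,
    real_inner_smul_left, real_inner_smul_left, h.inner_self, real_inner_comm, h.inner_AB,
    real_inner_comm, h.inner_AC, inradiusSq, radiusRatio]
  field_simp
  ring

theorem inner_bevanPoint_sub_vertex (h : IncenterFrame A B C I x y z) :
    ⟪bevanPoint A B C I x y z - A, I - A⟫ = 2 * radiusRatio x y z * inradiusSq x y z := by
  rw [← sub_sub_sub_cancel_right _ A I, ← neg_sub A I, inner_neg_right, inner_sub_left,
    h.inner_bevanPoint_sub_incenter, h.inner_self]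
  ring

theorem dist_midpoint_bevanPoint_eq (h : IncenterFrame A B C I x y z) :
    dist A (midpoint ℝ (bevanPoint A B C I x y z) I) =
      dist B (midpoint ℝ (bevanPoint A B C I x y z) I) := by
  apply dist_midpoint_eq_of_inner_eq
  rw [h.inner_bevanPoint_sub_vertex, ← bevanPoint_rotate, h.rotate.inner_bevanPoint_sub_vertex,
    radiusRatio_rotate x y z, inradiusSq_rotate x y z]

theorem inner_bevanPoint_sub_lineMap_bisector (h : IncenterFrame A B C I x y z) :
    ⟪bevanPoint A B C I x y z - lineMap A I ((y + z) / (2 * x)), I - A⟫ = 0 := by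
  have hx := h.x_pos
  have hy := h.y_pos
  have hz := h.z_pos
  have hself : ⟪I - A, I - A⟫ = x ^ 2 + inradiusSq x y z := by
    rw [← neg_sub A I, inner_neg_neg, h.inner_self]
  rw [lineMap_apply, vsub_eq_sub, vadd_eq_add, ← sub_sub, sub_right_comm, inner_sub_left,
    h.inner_bevanPoint_sub_vertex, real_inner_smul_left, hself, inradiusSq, radiusRatio]
  field_simp
  ring

theorem inner_bevanPoint_sub_extouchPoint (h : IncenterFrame A B C I x y z) :
    ⟪bevanPoint A B C I x y z - extouchPoint A B x y, B - A⟫ = 0 := by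
  have hxy : x + y ≠ 0 := (add_pos h.x_pos h.y_pos).ne'
  have hBe : ⟪bevanPoint A B C I x y z - I, B - A⟫ = y ^ 2 - x ^ 2 := by
    rw [← sub_sub_sub_cancel_right B A I, inner_sub_right, h.inner_bevanPoint_sub_incenter,
      ← bevanPoint_rotate, h.rotate.inner_bevanPoint_sub_incenter, inradiusSq_rotate x y z,
      radiusRatio_rotate x y z]
    ring
  have hE : ⟪extouchPoint A B x y - I, B - A⟫ = y ^ 2 - x ^ 2 := by
    rw [extouchPoint_sub hxy, ← sub_sub_sub_cancel_right B A I, inner_sub_right]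
    simp only [inner_add_left, real_inner_smul_left, real_inner_comm (A - I) (B - I),
      h.inner_self, h.inner_AB, h.rotate.inner_self, inradiusSq_rotate x y z]
    field_simp
    ring
  rw [← sub_sub_sub_cancel_right _ _ I, inner_sub_left, hBe, hE, sub_self]

theorem inner_extouchPoint_self (h : IncenterFrame A B C I x y z) :
    ⟪extouchPoint A B x y - I, extouchPoint A B x y - I⟫ = (x - y) ^ 2 + inradiusSq x y z := by
  have hxy : x + y ≠ 0 := (add_pos h.x_pos h.y_pos).ne'
  rw [extouchPoint_sub hxy]
  simp only [inner_add_left, inner_add_right, real_inner_smul_left, real_inner_smul_right,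
    real_inner_comm (A - I) (B - I), h.inner_self, h.inner_AB, h.rotate.inner_self,
    inradiusSq_rotate x y z]
  field_simp
  ring

theorem inner_extouchCenter_sub_incenter (h : IncenterFrame A B C I x y z) :
    ⟪extouchCenter A B C I x y z - I, A - I⟫ = x ^ 2 - radiusRatio x y z * x * (y + z) +
      (2 * radiusRatio x y z ^ 2 + 1) * inradiusSq x y z := by
  have hX : extouchCenter A B C I x y z - I =
      (1 - radiusRatio x y z) • (bevanPoint A B C I x y z - I) +
        radiusRatio x y z • ((A - I) + (B - I) + (C - I)) := by
    rw [extouchCenter, lineMap_apply_module]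
    module
  rw [hX, inner_add_left, real_inner_smul_left, real_inner_smul_left, inner_add_left,
    inner_add_left, h.inner_bevanPoint_sub_incenter, h.inner_self, real_inner_comm, h.inner_AB,
    real_inner_comm, h.inner_AC]
  ring

-- The constant is `2 (2R + r) (R - r) - (x ^ 2 + y ^ 2 + z ^ 2)`, symmetric in the three sides.
theorem dist_extouchPoint_extouchCenter_sq (h : IncenterFrame A B C I x y z) :
    dist (extouchPoint A B x y) (extouchCenter A B C I x y z) ^ 2 =
      dist I (extouchCenter A B C I x y z) ^ 2 +
        2 * (2 * radiusRatio x y z + 1) * (radiusRatio x y z - 1) * inradiusSq x y z -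
          (x ^ 2 + y ^ 2 + z ^ 2) := by
  have hx := h.x_pos
  have hy := h.y_pos
  have hz := h.z_pos
  have hB : ⟪extouchCenter A B C I x y z - I, B - I⟫ = y ^ 2 - radiusRatio x y z * y * (z + x) +
      (2 * radiusRatio x y z ^ 2 + 1) * inradiusSq x y z := by
    rw [← extouchCenter_rotate, h.rotate.inner_extouchCenter_sub_incenter,
      radiusRatio_rotate x y z, inradiusSq_rotate x y z]
  have hinner : ⟪extouchPoint A B x y - I, extouchCenter A B C I x y z - I⟫ =
      (x ^ 3 + y ^ 3 - radiusRatio x y z * (x ^ 2 * (y + z) + y ^ 2 * (z + x))) / (x + y) +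
        (2 * radiusRatio x y z ^ 2 + 1) * inradiusSq x y z := by
    rw [extouchPoint_sub (add_pos hx hy).ne', real_inner_smul_left, inner_add_left,
      real_inner_smul_left, real_inner_smul_left, real_inner_comm,
      h.inner_extouchCenter_sub_incenter, real_inner_comm, hB]
    field_simp
    ring
  rw [dist_comm I, dist_eq_norm, dist_eq_norm, ← sub_sub_sub_cancel_right _ _ I, norm_sub_sq_real,
    ← real_inner_self_eq_norm_sq, h.inner_extouchPoint_self, hinner, inradiusSq, radiusRatio]
  field_simp
  ring

theorem dist_extouchPoint_extouchCenter_eq (h : IncenterFrame A B C I x y z) :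
    dist (extouchPoint B C y z) (extouchCenter A B C I x y z) =
      dist (extouchPoint A B x y) (extouchCenter A B C I x y z) := by
  have hBC := h.rotate.dist_extouchPoint_extouchCenter_sq
  rw [extouchCenter_rotate, radiusRatio_rotate, inradiusSq_rotate] at hBC
  rw [← sq_eq_sq₀ dist_nonneg dist_nonneg, hBC, h.dist_extouchPoint_extouchCenter_sq]
  ring

end IncenterFrame

end InnerProductSpace

section Plane

variable {A B C I : Pt} {x y z : ℝ}

theorem eq_circumcenter3_of_dist_eq {Q : Pt} (h : AffineIndependent ℝ ![A, B, C])
    (hAB : dist A Q = dist B Q) (hAC : dist A Q = dist C Q) : Q = circumcenter3 A B C h := by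
  have hspan : affineSpan ℝ (Set.range ![A, B, C]) = ⊤ :=
    (h.affineSpan_eq_top_iff_card_eq_finrank_add_one).mpr (by simp)
  refine Affine.Simplex.eq_circumcenter_of_dist_eq (r := dist A Q) ⟨![A, B, C], h⟩
    (hspan ▸ AffineSubspace.mem_top ℝ Pt Q) fun i => ?_
  fin_cases i
  · rfl
  · exact hAB.symm
  · exact hAC.symm

theorem orthocenter3_eq (h : AffineIndependent ℝ ![A, B, C]) :
    orthocenter3 A B C h = A + B + C - (2 : ℝ) • circumcenter3 A B C h := by
  have hsum := Affine.Triangle.orthocenter_vsub_circumcenter_eq_sum_vsub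
    (⟨![A, B, C], h⟩ : Affine.Triangle ℝ Pt)
  rw [Fin.sum_univ_three] at hsum
  change orthocenter3 A B C h - circumcenter3 A B C h = (A - circumcenter3 A B C h) +
    (B - circumcenter3 A B C h) + (C - circumcenter3 A B C h) at hsum
  rw [sub_eq_iff_eq_add.mp hsum]
  module

theorem pedal_eq_lineMap {P X Y : Pt} {t : ℝ} (h : ⟪P - lineMap X Y t, Y - X⟫ = 0) :
    pedal P X Y = lineMap X Y t := by
  rw [pedal, EuclideanGeometry.coe_orthogonalProjection_eq_iff_mem]
  refine ⟨lineMap_mem_affineSpan_pair t X Y, ?_⟩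
  rwa [direction_affineSpan, vectorSpan_pair_rev, Submodule.mem_orthogonal_singleton_iff_inner_left]

theorem inner_sub_pedal (P X Y : Pt) : ⟪P - pedal P X Y, Y - pedal P X Y⟫ = 0 := by
  have hY : Y - pedal P X Y ∈ (affineSpan ℝ {X, Y}).direction :=
    AffineSubspace.vsub_mem_direction (right_mem_affineSpan_pair ℝ X Y)
      (EuclideanGeometry.orthogonalProjection_mem P)
  exact Submodule.inner_left_of_mem_orthogonal hY
    (EuclideanGeometry.vsub_orthogonalProjection_mem_direction_orthogonal _ P)

theorem midpoint_eq_circumcenter3_pedal {P Q : Pt}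
    (h : AffineIndependent ℝ ![pedal P A Q, pedal P B Q, pedal P C Q]) :
    midpoint ℝ P Q = circumcenter3 (pedal P A Q) (pedal P B Q) (pedal P C Q) h := by
  apply eq_circumcenter3_of_dist_eq <;>
    exact dist_midpoint_eq_of_inner_eq (by simp only [inner_sub_pedal])

theorem dist_lt_dist_add_dist_of_affineIndependent (h : AffineIndependent ℝ ![A, B, C]) :
    dist A C < dist A B + dist B C :=
  dist_lt_dist_add_dist_iff.mpr fun hB =>
    affineIndependent_iff_not_collinear_set.mp h hB.collinear

theorem incenter3_barycentric (hAB : A ≠ B) (C : Pt) :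
    dist B C • (A - incenter3 A B C) + dist C A • (B - incenter3 A B C) +
      dist A B • (C - incenter3 A B C) = 0 := by
  have hp : dist B C + dist C A + dist A B ≠ 0 :=
    (add_pos_of_nonneg_of_pos (add_nonneg dist_nonneg dist_nonneg) (dist_pos.mpr hAB)).ne'
  have hI : (dist B C + dist C A + dist A B) • incenter3 A B C =
      dist B C • A + dist C A • B + dist A B • C := smul_inv_smul₀ hp _
  rw [← sub_eq_zero.mpr hI.symm]
  module

theorem exists_incenterFrame (h : AffineIndependent ℝ ![A, B, C]) :
    ∃ x y z, IncenterFrame A B C (incenter3 A B C) x y z := by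
  have hne : A ≠ B := h.injective.ne (by decide : (0 : Fin 3) ≠ 1)
  have hA := dist_lt_dist_add_dist_of_affineIndependent h.comm_left
  have hB := dist_lt_dist_add_dist_of_affineIndependent h
  have hC := dist_lt_dist_add_dist_of_affineIndependent h.comm_right
  simp only [dist_comm B A, dist_comm A C, dist_comm C B] at hA hB hC
  have hBC : (dist A B + dist B C - dist C A) / 2 + (dist B C + dist C A - dist A B) / 2 =
      dist B C := by ring
  have hCA : (dist B C + dist C A - dist A B) / 2 + (dist C A + dist A B - dist B C) / 2 =
      dist C A := by ring
  have hAB : (dist C A + dist A B - dist B C) / 2 + (dist A B + dist B C - dist C A) / 2 =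
      dist A B := by ring
  exact ⟨(dist C A + dist A B - dist B C) / 2, (dist A B + dist B C - dist C A) / 2,
    (dist B C + dist C A - dist A B) / 2,
    { x_pos := by linarith
      y_pos := by linarith
      z_pos := by linarith
      dist_BC := hBC.symm
      dist_CA := hCA.symm
      dist_AB := hAB.symm
      incenter := by rw [hBC, hCA, hAB, incenter3_barycentric hne] }⟩

namespace IncenterFrame

theorem bevanPoint_eq (hF : IncenterFrame A B C I x y z) (h : AffineIndependent ℝ ![A, B, C]) :
    bevanPoint A B C I x y z = (2 : ℝ) • circumcenter3 A B C h - I := by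
  have hAC := hF.rotate.rotate.dist_midpoint_bevanPoint_eq
  rw [bevanPoint_rotate, bevanPoint_rotate] at hAC
  rw [← eq_circumcenter3_of_dist_eq h hF.dist_midpoint_bevanPoint_eq hAC.symm,
    midpoint_eq_smul_add, smul_invOf_smul, add_sub_cancel_right]

theorem pedal_bevanPoint_bisector (hF : IncenterFrame A B C I x y z) :
    pedal (bevanPoint A B C I x y z) A I = lineMap A I ((y + z) / (2 * x)) :=
  pedal_eq_lineMap hF.inner_bevanPoint_sub_lineMap_bisector

theorem pedal_bevanPoint_side (hF : IncenterFrame A B C I x y z) :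
    pedal (bevanPoint A B C I x y z) A B = extouchPoint A B x y :=
  pedal_eq_lineMap hF.inner_bevanPoint_sub_extouchPoint

theorem sum_pedal_bevanPoint_bisector (hF : IncenterFrame A B C I x y z) :
    pedal (bevanPoint A B C I x y z) A I + pedal (bevanPoint A B C I x y z) B I +
      pedal (bevanPoint A B C I x y z) C I = A + B + C + bevanPoint A B C I x y z - I := by
  have hB := hF.rotate.pedal_bevanPoint_bisector
  have hC := hF.rotate.rotate.pedal_bevanPoint_bisector
  rw [bevanPoint_rotate] at hB
  rw [bevanPoint_rotate, bevanPoint_rotate] at hC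
  rw [hF.pedal_bevanPoint_bisector, hB, hC]
  simp only [lineMap_apply_module', bevanPoint]
  abel

theorem orthocenter3_pedal_bevanPoint {Be : Pt} (hF : IncenterFrame A B C I x y z)
    (hBe : Be = bevanPoint A B C I x y z)
    (h : AffineIndependent ℝ ![pedal Be A I, pedal Be B I, pedal Be C I]) :
    orthocenter3 _ _ _ h = A + B + C - (2 : ℝ) • I := by
  subst hBe
  rw [orthocenter3_eq, ← midpoint_eq_circumcenter3_pedal, hF.sum_pedal_bevanPoint_bisector,
    midpoint_eq_smul_add, smul_invOf_smul]
  module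

theorem circumcenter3_pedal_bevanPoint {Be : Pt} (hF : IncenterFrame A B C I x y z)
    (hBe : Be = bevanPoint A B C I x y z)
    (h : AffineIndependent ℝ ![pedal Be B C, pedal Be C A, pedal Be A B]) :
    circumcenter3 _ _ _ h = extouchCenter A B C I x y z := by
  subst hBe
  have hAB := hF.dist_extouchPoint_extouchCenter_eq
  have hBC := hF.rotate.dist_extouchPoint_extouchCenter_eq
  rw [extouchCenter_rotate] at hBC
  have hB := hF.rotate.pedal_bevanPoint_side
  have hC := hF.rotate.rotate.pedal_bevanPoint_side
  rw [bevanPoint_rotate] at hB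
  rw [bevanPoint_rotate, bevanPoint_rotate] at hC
  apply (eq_circumcenter3_of_dist_eq h ?_ ?_).symm
  · rw [hB, hC, hBC]
  · rw [hB, hF.pedal_bevanPoint_side, hAB]

end IncenterFrame

end Plane

theorem stmt15 (A B C I O Be A₀ B₀ C₀ A' B' C' O₀ H' : Pt)
    (hABC : AffineIndependent ℝ ![A, B, C])
    (hI : I = incenter3 A B C)
    (hO : O = circumcenter3 A B C hABC)
    (hBe : Be = (2 : ℝ) • O - I)
    (hA₀ : A₀ = pedal Be B C) (hB₀ : B₀ = pedal Be C A) (hC₀ : C₀ = pedal Be A B)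
    (h₀ : AffineIndependent ℝ ![A₀, B₀, C₀])
    (hO₀ : O₀ = circumcenter3 A₀ B₀ C₀ h₀)
    (hA' : A' = pedal Be A I) (hB' : B' = pedal Be B I) (hC' : C' = pedal Be C I)
    (hA'B'C' : AffineIndependent ℝ ![A', B', C'])
    (hH' : H' = orthocenter3 A' B' C' hA'B'C') :
    Collinear ℝ ({Be, H', O₀} : Set Pt) := by
  subst hO hA₀ hB₀ hC₀ hA' hB' hC'
  obtain ⟨x, y, z, hF⟩ := exists_incenterFrame hABC
  rw [← hI] at hF
  have hBevan : Be = bevanPoint A B C I x y z := hBe.trans (hF.bevanPoint_eq hABC).symm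
  rw [hH', hO₀, hF.orthocenter3_pedal_bevanPoint hBevan, hF.circumcenter3_pedal_bevanPoint hBevan,
    hBevan, Set.pair_comm, Set.insert_comm]
  exact collinear_insert_of_mem_affineSpan_pair (lineMap_mem_affineSpan_pair _ _ _)

end
end

section
/- Let ABC be a triangle with incenter I and circumcenter O, and let Be be the Bevan point of ABC, i.e., the point reflection of I across O. Let A', B', C' be the pedals of Be on lines AI, BI, CI, and assume A', B', C' are affinely independent. Then the circumcenter of triangle A'B'C' is O, the circumcenter of ABC (equivalently, it is the midpoint of segment I Be). -/
open EuclideanGeometry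

noncomputable section

/-!
The projection of `Be` onto a line through `I` sees the segment `I Be` under a right angle, so by
Thales' theorem it lies on the sphere with diameter `I Be`. Hence the midpoint `O` of `I Be`
is equidistant from the pedals of `Be`, and it lies in their plane.
-/

lemma midpoint_two_smul_sub {R V : Type*} [Ring R] [Invertible (2 : R)] [AddCommGroup V]
    [Module R V] (p c : V) : midpoint R p ((2 : R) • c - p) = c := by
  rw [midpoint_eq_smul_add, add_sub_cancel, invOf_smul_smul]

section InnerProductSpace

open AffineSubspace

variable {V P : Type*} [NormedAddCommGroup V] [InnerProductSpace ℝ V] [MetricSpace P]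
  [NormedAddTorsor V P]

lemma orthogonalProjection_mem_sphere_ofDiameter {s : AffineSubspace ℝ P} [Nonempty s]
    [s.direction.HasOrthogonalProjection] {p : P} (hp : p ∈ s) (q : P) :
    (orthogonalProjection s q : P) ∈ Sphere.ofDiameter p q := by
  rw [← Sphere.angle_eq_pi_div_two_iff_mem_sphere_ofDiameter, EuclideanGeometry.angle,
    ← InnerProductGeometry.inner_eq_zero_iff_angle_eq_pi_div_two]
  exact Submodule.inner_right_of_mem_orthogonal
    (vsub_mem_direction hp (orthogonalProjection_mem q))
    (vsub_orthogonalProjection_mem_direction_orthogonal s q)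

theorem stmt16_general {n : ℕ} (T : Affine.Simplex ℝ P n) {I Be : P}
    (s : Fin (n + 1) → AffineSubspace ℝ P) [∀ i, Nonempty (s i)]
    [∀ i, (s i).direction.HasOrthogonalProjection] (hI : ∀ i, I ∈ s i)
    (hT : ∀ i, T.points i = orthogonalProjection (s i) Be)
    (hspan : midpoint ℝ I Be ∈ affineSpan ℝ (Set.range T.points)) :
    T.circumcenter = midpoint ℝ I Be := by
  have points_mem (i) : T.points i ∈ Sphere.ofDiameter I Be :=
    hT i ▸ orthogonalProjection_mem_sphere_ofDiameter (hI i) Be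
  exact (T.eq_circumcenter_of_dist_eq hspan points_mem).symm

end InnerProductSpace

lemma circumcenter3_pedal_eq_midpoint (A B C I P : Pt)
    (h : AffineIndependent ℝ ![pedal P A I, pedal P B I, pedal P C I]) :
    circumcenter3 (pedal P A I) (pedal P B I) (pedal P C I) h = midpoint ℝ I P := by
  refine stmt16_general _ (fun i ↦ line[ℝ, ![A, B, C] i, I])
    (fun i ↦ right_mem_affineSpan_pair ℝ _ I) (fun i ↦ by fin_cases i <;> rfl) ?_
  rw [Affine.Simplex.span_eq_top _ finrank_euclideanSpace_fin]
  exact AffineSubspace.mem_top ℝ Pt _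

theorem stmt16 (A B C I O Be A' B' C' : Pt)
    (hABC : AffineIndependent ℝ ![A, B, C])
    (hI : I = incenter3 A B C)
    (hO : O = circumcenter3 A B C hABC)
    (hBe : Be = (2 : ℝ) • O - I)
    (hA' : A' = pedal Be A I) (hB' : B' = pedal Be B I) (hC' : C' = pedal Be C I)
    (hA'B'C' : AffineIndependent ℝ ![A', B', C']) :
    circumcenter3 A' B' C' hA'B'C' = O ∧
    circumcenter3 A' B' C' hA'B'C' = midpoint ℝ I Be := by
  subst hA' hB' hC' hBe
  simp only [circumcenter3_pedal_eq_midpoint, midpoint_two_smul_sub, and_self]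

end
end
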